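/- Suppose: (i) the model is data uniformly relevant (DUR): there exist d, k > 0 such that for all |θ| > k, |∫_ℝ x·π(x | θ) dx| ≤ |θ| − d; (ii) the non-centred parametrisation is geometrically tight in parameter (GTIP): there exist a, b > 0 such that for every θ ∈ ℝ and every t ≥ 0, ∫_{{x : |x − θ| > t}} π(x | θ) dx ≤ a·e^{−b·t}. Then there exists α₀ > 0 such that for every α ∈ (0, α₀) there is a constant K with 0 < K < ∞ such that for all θ with |θ| > k, ∫_ℝ e^{α |x|} π(x | θ) dx ≤ e^{α |θ|}(1 − α d/2) + K. -/

import Mathlib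

open MeasureTheory Filter Set

noncomputable section

/-- Joint (unnormalised posterior) density `f_θ(x) = f₁(y - x) · f₂(x - θ)`. -/
def fjoint (f₁ f₂ : ℝ → ℝ) (y θ x : ℝ) : ℝ := f₁ (y - x) * f₂ (x - θ)

/-- Normalising constant `c_θ = ∫ f_θ(x) dx`. -/
def cnorm (f₁ f₂ : ℝ → ℝ) (y θ : ℝ) : ℝ := ∫ x, fjoint f₁ f₂ y θ x

/-- Conditional posterior density `π(x | θ) = f_θ(x)/c_θ`. -/
def post (f₁ f₂ : ℝ → ℝ) (y θ x : ℝ) : ℝ := fjoint f₁ f₂ y θ x / cnorm f₁ f₂ y θ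

/-- One-step transition density of the marginal Θ-chain of the centred Gibbs sampler:
`p(θ₀, θ₁) = (1/c_{θ₀}) ∫ f₂(x - θ₁) f_{θ₀}(x) dx`. -/
def gibbsTrans (f₁ f₂ : ℝ → ℝ) (y θ₀ θ₁ : ℝ) : ℝ :=
  (1 / cnorm f₁ f₂ y θ₀) * ∫ x, f₂ (x - θ₁) * fjoint f₁ f₂ y θ₀ x

/-- `n`-step transition density (for `n ≥ 1`; the value at `n = 0` is unused). -/
def gibbsTransN (f₁ f₂ : ℝ → ℝ) (y : ℝ) : ℕ → ℝ → ℝ → ℝ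
  | 0, _, _ => 0
  | 1, θ₀, θ₁ => gibbsTrans f₁ f₂ y θ₀ θ₁
  | (n + 2), θ₀, θ₁ => ∫ u, gibbsTransN f₁ f₂ y (n + 1) θ₀ u * gibbsTrans f₁ f₂ y u θ₁

lemma aux_exp_le (v : ℝ) : Real.exp v ≤ 1 + v + v ^ 2 * Real.exp |v| := by
  have h1 : 1 ≤ Real.exp |v| := Real.one_le_exp (abs_nonneg v)
  rcases le_total |v| 1 with h | h
  · have := (abs_le.1 (Real.abs_exp_sub_one_sub_id_le h)).2
    nlinarith [sq_nonneg v]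
  · rcases le_total 0 v with h0 | h0
    · rw [abs_of_nonneg h0] at *
      have h3 : 1 ≤ v ^ 2 := by nlinarith
      nlinarith [mul_le_mul_of_nonneg_right h3 (Real.exp_pos v).le]
    · have h2 : Real.exp v ≤ 1 := Real.exp_le_one_iff.2 h0
      rw [abs_of_nonpos h0] at h
      nlinarith [sq_nonneg v]

lemma aux_moment (μ : Measure ℝ) [IsProbabilityMeasure μ] (θ a b : ℝ) (ha : 0 < a) (hb : 0 < b)
    (htail : ∀ t : ℝ, 0 ≤ t → μ {x : ℝ | t < |x - θ|} ≤ ENNReal.ofReal (a * Real.exp (-b * t))) :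
    Integrable (fun x => Real.exp (b / 2 * |x - θ|)) μ ∧
      ∫ x, Real.exp (b / 2 * |x - θ|) ∂μ ≤ 1 + a := by
  have hint : ∀ s : ℝ, ∫ t in (0:ℝ)..s, (b / 2) * Real.exp (b / 2 * t)
      = Real.exp (b / 2 * s) - 1 := by
    intro s
    rw [intervalIntegral.integral_eq_sub_of_hasDerivAt (f := fun t => Real.exp (b / 2 * t))]
    · simp
    · intro x _
      have := ((hasDerivAt_id x).const_mul (b / 2)).exp
      simp only [id, mul_one] at this
      rw [mul_comm (Real.exp _)] at this
      exact this
    · exact Continuous.intervalIntegrable (by fun_prop) _ _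
  have key := lintegral_comp_eq_lintegral_meas_lt_mul (f := fun x => |x - θ|)
    (g := fun t => (b / 2) * Real.exp (b / 2 * t)) μ
    (Eventually.of_forall fun x => abs_nonneg _) (by fun_prop)
    (fun t _ => Continuous.intervalIntegrable (by fun_prop) _ _)
    (Eventually.of_forall fun t => by positivity)
  simp only [hint] at key
  have hI : IntegrableOn (fun t : ℝ => a * (b / 2) * Real.exp ((-(b / 2)) * t)) (Ioi 0) :=
    (integrableOn_exp_mul_Ioi (by linarith) 0).const_mul _
  have hle : ∫⁻ x, ENNReal.ofReal (Real.exp (b / 2 * |x - θ|) - 1) ∂μ ≤ ENNReal.ofReal a := by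
    rw [key]
    calc _ ≤ ∫⁻ t in Ioi (0:ℝ), ENNReal.ofReal (a * (b / 2) * Real.exp ((-(b / 2)) * t)) := by
          refine setLIntegral_mono (by fun_prop) fun t ht => ?_
          refine (mul_le_mul_left (htail t (le_of_lt ht)) _).trans ?_
          rw [← ENNReal.ofReal_mul (by positivity)]
          apply le_of_eq
          congr 1
          have : Real.exp (-(b / 2) * t) = Real.exp (-b * t) * Real.exp (b / 2 * t) := by
            rw [← Real.exp_add]; congr 1; ring
          rw [this]; ring
      _ = ENNReal.ofReal a := by
          rw [← ofReal_integral_eq_lintegral_ofReal hI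
            (Eventually.of_forall fun t => by positivity)]
          congr 1
          rw [integral_const_mul, integral_exp_mul_Ioi (by linarith)]
          field_simp
          simp
  have hnn : ∀ x : ℝ, 0 ≤ Real.exp (b / 2 * |x - θ|) - 1 := fun x => by
    have : 1 ≤ Real.exp (b / 2 * |x - θ|) := Real.one_le_exp (by positivity)
    linarith
  have hint1 : Integrable (fun x => Real.exp (b / 2 * |x - θ|) - 1) μ := by
    refine ⟨by fun_prop, ?_⟩
    rw [hasFiniteIntegral_iff_ofReal (Eventually.of_forall hnn)]
    exact hle.trans_lt ENNReal.ofReal_lt_top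
  have hint2 : Integrable (fun x => Real.exp (b / 2 * |x - θ|)) μ := by
    refine (hint1.add (integrable_const (1:ℝ))).congr (Eventually.of_forall fun x => ?_)
    simp only [Pi.add_apply]; ring
  refine ⟨hint2, ?_⟩
  have h3 : ∫ x, (Real.exp (b / 2 * |x - θ|) - 1) ∂μ ≤ a := by
    rw [integral_eq_lintegral_of_nonneg_ae (Eventually.of_forall hnn) (by fun_prop)]
    exact ENNReal.toReal_le_of_le_ofReal ha.le hle
  rw [integral_sub hint2 (integrable_const _)] at h3
  simp at h3
  linarith

lemma aux_pt (θ b α x σ : ℝ) (hb : 0 < b) (hα : 0 < α) (hαb : α < b / 4)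
    (hσ : σ = 1 ∨ σ = -1) (hσθ : σ * θ = |θ|) :
    Real.exp (α * |x|) ≤ Real.exp (α * |θ|) *
      (1 + α * (σ * x - |θ|) + α ^ 2 * (32 / b ^ 2) * Real.exp (b / 2 * |x - θ|))
      + Real.exp (b / 2 * |x - θ|) := by
  have habs : abs (σ * x - |θ|) = |x - θ| := by
    rw [← hσθ, ← mul_sub, abs_mul]
    rcases hσ with h | h <;> simp [h]
  set u := σ * x - |θ| with hu
  rw [← habs]
  have hu0 : 0 ≤ |u| := abs_nonneg u
  have h1 : Real.exp (α * |x|) ≤ Real.exp (α * (σ * x)) + Real.exp (-(α * (σ * x))) := by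
    have h2 : |x| = σ * x ∨ |x| = -(σ * x) := by
      rcases hσ with h | h <;> rcases abs_choice x with h' | h' <;> simp [h, h']
    have := Real.exp_pos (α * (σ * x))
    have := Real.exp_pos (-(α * (σ * x)))
    rcases h2 with h2 | h2 <;> rw [h2]
    · linarith
    · rw [mul_neg]; linarith
  have h3 : Real.exp (α * (σ * x)) = Real.exp (α * |θ|) * Real.exp (α * u) := by
    rw [← Real.exp_add]; congr 1; rw [hu]; ring
  have h4 : Real.exp (-(α * (σ * x))) ≤ Real.exp (b / 2 * |u|) := by
    apply Real.exp_le_exp.2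
    have e : σ * x = u + |θ| := by rw [hu]; ring
    rw [e]
    have := neg_abs_le u
    have := mul_nonneg hα.le (abs_nonneg θ)
    nlinarith
  have h5 := aux_exp_le (α * u)
  have h6 : Real.exp |α * u| ≤ Real.exp (b / 4 * |u|) := by
    apply Real.exp_le_exp.2
    rw [abs_mul, abs_of_pos hα]
    nlinarith
  have h7 : u ^ 2 ≤ 32 / b ^ 2 * Real.exp (b / 4 * |u|) := by
    have := Real.quadratic_le_exp_of_nonneg (x := b / 4 * |u|) (by positivity)
    have h8 : (b / 4 * |u|) ^ 2 / 2 ≤ Real.exp (b / 4 * |u|) := by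
      have : 0 ≤ b / 4 * |u| := by positivity
      linarith
    have h9 : u ^ 2 = 32 / b ^ 2 * ((b / 4 * |u|) ^ 2 / 2) := by
      rw [mul_pow, sq_abs]; field_simp; ring
    rw [h9]
    gcongr
  have h10 : Real.exp (b / 2 * |u|) = Real.exp (b / 4 * |u|) * Real.exp (b / 4 * |u|) := by
    rw [← Real.exp_add]; congr 1; ring
  have h11 : (α * u) ^ 2 * Real.exp |α * u| ≤
      α ^ 2 * (32 / b ^ 2) * Real.exp (b / 2 * |u|) := by
    calc (α * u) ^ 2 * Real.exp |α * u| = α ^ 2 * (u ^ 2 * Real.exp |α * u|) := by ring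
      _ ≤ α ^ 2 * ((32 / b ^ 2 * Real.exp (b / 4 * |u|)) * Real.exp (b / 4 * |u|)) := by
        gcongr
      _ = _ := by rw [h10]; ring
  have h12 : Real.exp (α * |θ|) * Real.exp (α * u) ≤ Real.exp (α * |θ|) *
      (1 + α * u + α ^ 2 * (32 / b ^ 2) * Real.exp (b / 2 * |u|)) := by
    apply mul_le_mul_of_nonneg_left _ (Real.exp_pos _).le
    linarith
  linarith

lemma aux_core (μ : Measure ℝ) [IsProbabilityMeasure μ] (θ a b d α : ℝ) (ha : 0 < a) (hb : 0 < b)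
    (htail : ∀ t : ℝ, 0 ≤ t → μ {x : ℝ | t < |x - θ|} ≤ ENNReal.ofReal (a * Real.exp (-b * t)))
    (hmean : |∫ x, x ∂μ| ≤ |θ| - d) (hα : 0 < α) (hαb : α < b / 4)
    (hαd : α * (32 / b ^ 2 * (1 + a)) ≤ d / 2) :
    ∫ x, Real.exp (α * |x|) ∂μ ≤ Real.exp (α * |θ|) * (1 - α * d / 2) + (1 + a) := by
  obtain ⟨hI, hM⟩ := aux_moment μ θ a b ha hb htail
  have hX : Integrable (fun x : ℝ => x) μ := by
    have h1 : Integrable (fun x : ℝ => x - θ) μ := by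
      refine (hI.const_mul (2 / b)).mono' (by fun_prop) (Eventually.of_forall fun x => ?_)
      rw [Real.norm_eq_abs]
      have h := Real.add_one_le_exp (b / 2 * |x - θ|)
      have e : |x - θ| = 2 / b * (b / 2 * |x - θ|) := by field_simp
      calc |x - θ| = 2 / b * (b / 2 * |x - θ|) := e
        _ ≤ _ := by gcongr; linarith
    refine (h1.add (integrable_const θ)).congr (Eventually.of_forall fun x => ?_)
    simp only [Pi.add_apply]; ring
  obtain ⟨σ, hσ, hσθ⟩ : ∃ σ : ℝ, (σ = 1 ∨ σ = -1) ∧ σ * θ = |θ| := by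
    rcases abs_choice θ with h | h
    · exact ⟨1, Or.inl rfl, by rw [h]; ring⟩
    · exact ⟨-1, Or.inr rfl, by rw [h]; ring⟩
  have hσX0 : Integrable (fun x : ℝ => σ * x - |θ|) μ :=
    (hX.const_mul σ).sub (integrable_const _)
  have hσX1 : Integrable (fun x : ℝ => α * (σ * x - |θ|)) μ := hσX0.const_mul α
  have hσX : Integrable (fun x : ℝ => 1 + α * (σ * x - |θ|)) μ :=
    (integrable_const _).add (((hX.const_mul σ).sub (integrable_const _)).const_mul α)
  have hR : Integrable (fun x : ℝ => 1 + α * (σ * x - |θ|)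
      + α ^ 2 * (32 / b ^ 2) * Real.exp (b / 2 * |x - θ|)) μ := hσX.add (hI.const_mul _)
  have hmono : ∫ x, Real.exp (α * |x|) ∂μ ≤ ∫ x, (Real.exp (α * |θ|) *
      (1 + α * (σ * x - |θ|) + α ^ 2 * (32 / b ^ 2) * Real.exp (b / 2 * |x - θ|))
      + Real.exp (b / 2 * |x - θ|)) ∂μ :=
    integral_mono_of_nonneg (Eventually.of_forall fun x => (Real.exp_pos _).le)
      ((hR.const_mul _).add hI)
      (Eventually.of_forall fun x => aux_pt θ b α x σ hb hα hαb hσ hσθ)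
  refine hmono.trans ?_
  rw [integral_add (hR.const_mul _) hI, integral_const_mul, integral_add hσX (hI.const_mul _),
    integral_const_mul, integral_add (integrable_const _) hσX1, integral_const_mul,
    integral_sub (hX.const_mul σ) (integrable_const _), integral_const_mul]
  simp only [integral_const, probReal_univ, smul_eq_mul, one_mul]
  have hm : σ * ∫ x, x ∂μ ≤ |θ| - d := by
    have h1 := le_abs_self (∫ x, x ∂μ)
    have h2 := neg_abs_le (∫ x, x ∂μ)
    rcases hσ with h | h <;> rw [h] <;> linarith
  set W := ∫ x, Real.exp (b / 2 * |x - θ|) ∂μ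
  have h1 : α * (σ * ∫ x, x ∂μ - |θ|) ≤ α * (-d) :=
    mul_le_mul_of_nonneg_left (by linarith) hα.le
  have h2 : α ^ 2 * (32 / b ^ 2) * W ≤ α * (d / 2) := by
    calc α ^ 2 * (32 / b ^ 2) * W ≤ α ^ 2 * (32 / b ^ 2) * (1 + a) := by gcongr
      _ = α * (α * (32 / b ^ 2 * (1 + a))) := by ring
      _ ≤ _ := by gcongr
  have h3 := mul_le_mul_of_nonneg_left (a := Real.exp (α * |θ|))
    (show 1 + α * (σ * ∫ x, x ∂μ - |θ|) + α ^ 2 * (32 / b ^ 2) * W ≤ 1 - α * d / 2 by linarith)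
    (Real.exp_pos _).le
  linarith

/-- Lemma on absolute exponential drift: under DUR (with constants `d, k`)
and GTIP of the non-centred parametrisation, for all sufficiently small `α > 0` there is a
finite constant `K > 0` with
`∫ e^{α|x|} π(x|θ) dx ≤ e^{α|θ|}(1 - αd/2) + K` for all `|θ| > k`. -/
theorem dur_gtip_absolute_exponential_moment_bound (f₁ f₂ : ℝ → ℝ) (y : ℝ)
    (hf₁c : Continuous f₁) (hf₂c : Continuous f₂)
    (hf₁pos : ∀ t, 0 < f₁ t) (hf₂pos : ∀ t, 0 < f₂ t)
    (hf₁bdd : ∃ M, ∀ t, f₁ t ≤ M) (hf₂bdd : ∃ M, ∀ t, f₂ t ≤ M)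
    (hf₁sym : ∀ t, f₁ (-t) = f₁ t) (hf₂sym : ∀ t, f₂ (-t) = f₂ t)
    (hf₁prob : ∫ t, f₁ t = 1) (hf₂prob : ∫ t, f₂ t = 1)
    (hjint : ∀ θ, Integrable (fun x => fjoint f₁ f₂ y θ x))
    (hcpos : ∀ θ, 0 < cnorm f₁ f₂ y θ)
    (d k : ℝ) (hd : 0 < d) (hk : 0 < k)
    (hDUR : ∀ θ : ℝ, k < |θ| → |∫ x, x * post f₁ f₂ y θ x| ≤ |θ| - d)
    (hGTIP : ∃ a > (0 : ℝ), ∃ b > (0 : ℝ), ∀ θ : ℝ, ∀ t : ℝ, 0 ≤ t →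
      (∫ x in {x : ℝ | t < |x - θ|}, post f₁ f₂ y θ x) ≤ a * Real.exp (-b * t)) :
    ∃ α₀ > (0 : ℝ), ∀ α : ℝ, 0 < α → α < α₀ →
      ∃ K : ℝ, 0 < K ∧
        ∀ θ : ℝ, k < |θ| →
          (∫ x, Real.exp (α * |x|) * post f₁ f₂ y θ x) ≤
            Real.exp (α * |θ|) * (1 - α * d / 2) + K := by
  obtain ⟨a, ha, b, hb, hG⟩ := hGTIP
  have hC : 0 < 32 / b ^ 2 * (1 + a) := by positivity
  refine ⟨min (b / 4) (d / 2 / (32 / b ^ 2 * (1 + a))), by positivity, ?_⟩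
  intro α hα hαlt
  refine ⟨1 + a, by positivity, fun θ hθ => ?_⟩
  have hαb := hαlt.trans_le (min_le_left _ _)
  have hαd := ((lt_div_iff₀ hC).1 (hαlt.trans_le (min_le_right _ _))).le
  have hp0 : ∀ x, 0 ≤ post f₁ f₂ y θ x := fun x =>
    div_nonneg (mul_pos (hf₁pos _) (hf₂pos _)).le (hcpos θ).le
  have hpI : Integrable (post f₁ f₂ y θ) := (hjint θ).div_const _
  have hpc : Continuous (post f₁ f₂ y θ) := by
    unfold post fjoint
    fun_prop
  have hp1 : ∫ x, post f₁ f₂ y θ x = 1 := by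
    unfold post
    rw [integral_div]
    exact div_self (hcpos θ).ne'
  let μ : Measure ℝ := volume.withDensity fun x => ENNReal.ofReal (post f₁ f₂ y θ x)
  have hμs : ∀ s, MeasurableSet s → μ s = ENNReal.ofReal (∫ x in s, post f₁ f₂ y θ x) := by
    intro s hs
    rw [withDensity_apply _ hs, ofReal_integral_eq_lintegral_ofReal hpI.integrableOn
      (Eventually.of_forall hp0)]
  have hμP : IsProbabilityMeasure μ := ⟨by rw [hμs _ MeasurableSet.univ]; simp [hp1]⟩
  have hμi : ∀ g : ℝ → ℝ, ∫ x, g x ∂μ = ∫ x, g x * post f₁ f₂ y θ x := by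
    intro g
    rw [integral_withDensity_eq_integral_toReal_smul (by fun_prop)
      (Eventually.of_forall fun x => ENNReal.ofReal_lt_top)]
    congr 1
    ext x
    rw [ENNReal.toReal_ofReal (hp0 x), smul_eq_mul, mul_comm]
  rw [← hμi]
  refine aux_core μ θ a b d α ha hb (fun t ht => ?_) ?_ hα hαb hαd
  · rw [hμs _ (measurableSet_lt measurable_const (by fun_prop))]
    exact ENNReal.ofReal_le_ofReal (hG θ t ht)
  · rw [hμi]
    exact hDUR θ hθ
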